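/- For every q ≤ 1966: the word w contains no factor v having kernel period q such that 34·|v| ≥ 35·q (equivalently, |v|/q ≥ 35/34). (Remark R2.) -/

import Mathlib

/-- The four-letter alphabet `A₄ = {1,2,3,4}`; the value `k : Fin 4` represents letter `k+1`. -/
abbrev A4 := Fin 4

/-- The morphism `f` on letters: `f(1)=121, f(2)=123, f(3)=141, f(4)=142`
(letters `1,2,3,4` encoded as `0,1,2,3`). -/
def fm : A4 → List A4
  | 0 => [0, 1, 0]
  | 1 => [0, 1, 2]
  | 2 => [0, 3, 0]
  | 3 => [0, 3, 1]

/-- The morphism `f` extended to words by concatenation. -/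
def fw (u : List A4) : List A4 := u.flatMap fm

/-- The fixed point `w` of `f` starting with the letter `1`: since `|f^k(1)| = 3^k` and each
`f^k(1)` is a prefix of `f^(k+1)(1)`, the `n`-th letter of `w` is the `n`-th letter of
`f^(n+1)(1)`. -/
def w (n : ℕ) : A4 := ((fw^[n + 1]) [0]).getD n 0

/-- The finite word `t` occurs at position `i` in the infinite word `x`. -/
def OccursAt {α : Type*} (t : List α) (x : ℕ → α) (i : ℕ) : Prop :=
  t = (List.range t.length).map fun k => x (i + k)

/-- The finite word `v` is a factor of the infinite word `x`. -/
def FactorOf {α : Type*} (v : List α) (x : ℕ → α) : Prop :=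
  ∃ i, OccursAt v x i

/-- The finite word `v` has period `q ≥ 1`: `v(j) = v(j+q)` whenever `0 ≤ j < |v| - q`. -/
def HasPeriod {α : Type*} (v : List α) (q : ℕ) : Prop :=
  1 ≤ q ∧ ∀ j, j + q < v.length → v[j]? = v[j + q]?

/-- A word lies in `ker ψ` if each letter of `A₄` occurs in it a number of times
divisible by `4`. -/
def InKerPsi (u : List A4) : Prop := ∀ a : A4, 4 ∣ u.count a

/-- `q` is a kernel period of `v`: `1 ≤ q ≤ |v|`, `v` has period `q`, and the prefix of `v`
of length `q` lies in `ker ψ`. -/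
def KernelPeriod (v : List A4) (q : ℕ) : Prop :=
  q ≤ v.length ∧ HasPeriod v q ∧ InKerPsi (v.take q)

/-!
The word `w` is a product of blocks `f(x)`, and the incidence matrix of `f` is invertible modulo
`4`, so taking images and preimages under `f` preserves membership in `ker ψ`. A kernel repetition
of period `q` and length `q + e` is a run of `e + 1` consecutive positions at which the factor of
length `q` lies in `ker ψ`; the claim is that such a run has length at most `q / 34`, and it holds
for every `q`. For `q < 136` it is a finite computation on the images `f⁵(ab)` of two-letter
factors. For `q ≥ 136` a longer run has length at least `5`, which forces `q = 3p`, and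
desubstitution yields a run for the period `p`. By induction that run obeys the bound, so passing
to `3p` has lengthened it from `L` to `3L + 1`, the maximum possible. The letters around its two
ends only allow this for `L = 1`, which contradicts `q ≥ 136`, or for `L = 3` and `p = 3r` with
`0 < r < 40`, in which case no factor of length `r` lies in `ker ψ`.
-/

section Parikh

/-- The Parikh vector of a word, reduced modulo `4`: this is `ψ` with values in `(ℤ/4)⁴`. -/
def parikhVector (u : List A4) : A4 → ZMod 4 := fun a => u.count a

theorem inKerPsi_iff_parikhVector_eq_zero {u : List A4} : InKerPsi u ↔ parikhVector u = 0 := by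
  simp only [InKerPsi, funext_iff, parikhVector, Pi.zero_apply, ZMod.natCast_eq_zero_iff]

theorem parikhVector_append (u v : List A4) :
    parikhVector (u ++ v) = parikhVector u + parikhVector v := by
  ext a
  simp [parikhVector]

theorem parikhVector_singleton (x : A4) : parikhVector [x] = Pi.single x 1 := by
  ext a
  by_cases h : x = a
  · simp [parikhVector, h]
  · simp [parikhVector, h, Ne.symm h]

theorem parikhVector_singleton_inj {x y : A4} :
    parikhVector [x] = parikhVector [y] ↔ x = y := by
  revert x y
  decide

/-- The incidence matrix of the morphism `f` modulo `4`; its columns are the Parikh vectors of the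
images of the letters. -/
def incidenceMatrix : Matrix A4 A4 (ZMod 4) := Matrix.of fun a x => parikhVector (fm x) a

theorem parikhVector_fw (u : List A4) :
    parikhVector (fw u) = incidenceMatrix.mulVec (parikhVector u) := by
  induction u with
  | nil => simp [fw, parikhVector, funext_iff, Matrix.mulVec, dotProduct]
  | cons x u ih =>
    have hfw : fw (x :: u) = fm x ++ fw u := rfl
    rw [hfw, ← List.singleton_append, parikhVector_append, parikhVector_append, Matrix.mulVec_add,
      ih, parikhVector_singleton, Matrix.mulVec_single_one]
    rfl

theorem mulVec_incidenceMatrix_injective : Function.Injective incidenceMatrix.mulVec := by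
  refine Matrix.mulVec_injective_of_isUnit ((Matrix.isUnit_iff_isUnit_det _).2 ?_)
  have hdet : incidenceMatrix.det = -1 := by decide +kernel
  exact hdet ▸ isUnit_one.neg

theorem inKerPsi_fw {u : List A4} : InKerPsi (fw u) ↔ InKerPsi u := by
  rw [inKerPsi_iff_parikhVector_eq_zero, inKerPsi_iff_parikhVector_eq_zero, parikhVector_fw]
  exact mulVec_incidenceMatrix_injective.eq_iff' (Matrix.mulVec_zero _)

theorem InKerPsi.four_dvd_length {u : List A4} (hu : InKerPsi u) : 4 ∣ u.length := by
  rw [← List.sum_toFinset_count_eq_length]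
  exact Finset.dvd_sum fun a _ => hu a

theorem InKerPsi.prod_map_eq_one {M : Type*} [CommMonoid M] {u : List A4} (hu : InKerPsi u)
    {g : A4 → M} (hg : ∀ a, g a ^ 4 = 1) : (u.map g).prod = 1 := by
  rw [Finset.prod_list_map_count]
  refine Finset.prod_eq_one fun a _ => ?_
  obtain ⟨k, hk⟩ := hu a
  rw [hk, pow_mul, hg, one_pow]

end Parikh

section FixedPoint

theorem fw_append (u v : List A4) : fw (u ++ v) = fw u ++ fw v := List.flatMap_append

theorem fw_iterate_append (k : ℕ) (u v : List A4) :
    fw^[k] (u ++ v) = fw^[k] u ++ fw^[k] v := by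
  induction k generalizing u v with
  | zero => rfl
  | succ k ih => simp only [Function.iterate_succ_apply, fw_append, ih]

theorem length_fw (u : List A4) : (fw u).length = 3 * u.length := by
  have hfm : ∀ x, (fm x).length = 3 := by decide
  simp [fw, List.length_flatMap, hfm, mul_comm]

theorem length_fw_iterate (k : ℕ) (u : List A4) : (fw^[k] u).length = 3 ^ k * u.length := by
  induction k generalizing u with
  | zero => simp
  | succ k ih => rw [Function.iterate_succ_apply, ih, length_fw, pow_succ, mul_assoc]

theorem fw_iterate_prefix {k m : ℕ} (h : k ≤ m) : fw^[k] [0] <+: fw^[m] [0] := by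
  induction m, h using Nat.le_induction with
  | base => exact List.prefix_rfl
  | succ m _ ih =>
    have hsplit : fw^[m + 1] [0] = fw^[m] [0] ++ fw^[m] [1, 0] := by
      rw [Function.iterate_succ_apply, ← fw_iterate_append]
      rfl
    exact ih.trans (hsplit ▸ List.prefix_append _ _)

/-- The factor of `w` of length `m` at position `i`. -/
def wFactor (i m : ℕ) : List A4 := (List.range' i m).map w

theorem wFactor_add (i m n : ℕ) : wFactor i (m + n) = wFactor i m ++ wFactor (i + m) n := by
  rw [wFactor, ← List.range'_append_1, List.map_append, wFactor, wFactor]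

theorem take_wFactor {m n : ℕ} (h : m ≤ n) (i : ℕ) : (wFactor i n).take m = wFactor i m := by
  rw [wFactor, ← List.map_take, List.take_range'_of_length_ge h, wFactor]

theorem length_wFactor (i m : ℕ) : (wFactor i m).length = m := by simp [wFactor]

theorem wFactor_one (i : ℕ) : wFactor i 1 = [w i] := rfl

theorem OccursAt.eq_wFactor {v : List A4} {i : ℕ} (h : OccursAt v w i) :
    v = wFactor i v.length := by
  unfold OccursAt at h
  rwa [wFactor, List.range'_eq_map_range, List.map_map]

theorem fw_iterate_singleton_zero (k : ℕ) : fw^[k] [0] = wFactor 0 (3 ^ k) := by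
  refine List.ext_getElem (by simp [length_fw_iterate, length_wFactor]) fun n hn _ => ?_
  have hn' : n < (fw^[n + 1] [0]).length := by
    rw [length_fw_iterate, List.length_singleton, mul_one]
    exact n.lt_succ_self.trans (Nat.lt_pow_self (by norm_num))
  have hw : w n = (fw^[n + 1] [0])[n] := List.getD_eq_getElem _ _ hn'
  have hagree : (fw^[k] [0])[n] = (fw^[n + 1] [0])[n] := by
    rcases le_total k (n + 1) with h | h
    · exact (fw_iterate_prefix h).getElem hn
    · exact ((fw_iterate_prefix h).getElem hn').symm
  simp [wFactor, hagree, hw]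

theorem fm_w (n : ℕ) : fm (w n) = wFactor (3 * n) 3 := by
  have hfw : fw [w n] = fm (w n) := by simp [fw]
  obtain ⟨m, hm⟩ : ∃ m, 3 ^ n = n + (1 + m) := by
    have : n < 3 ^ n := Nat.lt_pow_self (by norm_num)
    exact ⟨3 ^ n - (n + 1), by omega⟩
  have h : fw (wFactor 0 (n + (1 + m))) = wFactor 0 (3 * n + (3 + 3 * m)) := by
    rw [← hm, ← fw_iterate_singleton_zero, ← Function.iterate_succ_apply' fw,
      fw_iterate_singleton_zero, pow_succ, hm]
    ring_nf
  rw [wFactor_add, wFactor_add, wFactor_add, wFactor_add, fw_append, fw_append, zero_add, zero_add,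
    wFactor_one, hfw] at h
  have hsuffix := List.append_inj_right h (by simp [length_fw, length_wFactor])
  exact List.append_inj_left hsuffix (by rw [← hfw, length_fw, length_wFactor]; rfl)

theorem fw_wFactor (i m : ℕ) : fw (wFactor i m) = wFactor (3 * i) (3 * m) := by
  induction m with
  | zero => rfl
  | succ m ih =>
    have hfw : fw [w (i + m)] = fm (w (i + m)) := by simp [fw]
    rw [wFactor_add, fw_append, ih, wFactor_one, hfw, fm_w, mul_add, mul_add, wFactor_add]

theorem fw_iterate_wFactor (k i m : ℕ) :
    fw^[k] (wFactor i m) = wFactor (3 ^ k * i) (3 ^ k * m) := by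
  induction k generalizing i m with
  | zero => simp
  | succ k ih => rw [Function.iterate_succ_apply, fw_wFactor, ih]; ring_nf

theorem w_block_cases (n : ℕ) :
    (w n = 0 ∧ w (3 * n) = 0 ∧ w (3 * n + 1) = 1 ∧ w (3 * n + 2) = 0) ∨
    (w n = 1 ∧ w (3 * n) = 0 ∧ w (3 * n + 1) = 1 ∧ w (3 * n + 2) = 2) ∨
    (w n = 2 ∧ w (3 * n) = 0 ∧ w (3 * n + 1) = 3 ∧ w (3 * n + 2) = 0) ∨
    (w n = 3 ∧ w (3 * n) = 0 ∧ w (3 * n + 1) = 3 ∧ w (3 * n + 2) = 1) := by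
  have h : fm (w n) = [w (3 * n), w (3 * n + 1), w (3 * n + 2)] := fm_w n
  generalize w n = x at h ⊢
  fin_cases x <;> simp [fm] at h <;> simp [← h]

theorem w_three_mul (n : ℕ) : w (3 * n) = 0 := by
  have := w_block_cases n
  tauto

theorem w_three_mul_add_one_ne_zero (n : ℕ) : w (3 * n + 1) ≠ 0 := by
  rcases w_block_cases n with h | h | h | h <;> simp [h]

end FixedPoint

section Desubstitution

/-- The positions at which the factor of `w` of length `q` lies in `ker ψ`. -/
def kernelReturns (q : ℕ) : Set ℕ := {i | InKerPsi (wFactor i q)}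

variable {p q s t : ℕ}

theorem parikhVector_wFactor_succ (i q : ℕ) :
    parikhVector [w i] + parikhVector (wFactor (i + 1) q) =
      parikhVector (wFactor i q) + parikhVector [w (i + q)] := by
  rw [← parikhVector_append, ← parikhVector_append, ← wFactor_one, ← wFactor_one, ← wFactor_add,
    ← wFactor_add, add_comm q]

theorem succ_mem_kernelReturns_iff {i : ℕ} (hi : i ∈ kernelReturns q) :
    i + 1 ∈ kernelReturns q ↔ w i = w (i + q) := by
  have h := parikhVector_wFactor_succ i q
  rw [kernelReturns, Set.mem_ofPred_eq, inKerPsi_iff_parikhVector_eq_zero] at hi ⊢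
  rw [hi, zero_add] at h
  rw [← parikhVector_singleton_inj, ← h, left_eq_add]

theorem mem_kernelReturns_iff_of_succ_mem {i : ℕ} (hi : i + 1 ∈ kernelReturns q) :
    i ∈ kernelReturns q ↔ w i = w (i + q) := by
  have h := parikhVector_wFactor_succ i q
  rw [kernelReturns, Set.mem_ofPred_eq, inKerPsi_iff_parikhVector_eq_zero] at hi ⊢
  rw [hi, add_zero] at h
  rw [← parikhVector_singleton_inj, h, add_eq_right]

theorem three_mul_mem_kernelReturns_iff {i : ℕ} :
    3 * i ∈ kernelReturns (3 * q) ↔ i ∈ kernelReturns q := by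
  simp only [kernelReturns, Set.mem_ofPred_eq, ← fw_wFactor, inKerPsi_fw]

theorem three_mul_add_one_mem_kernelReturns_iff {i : ℕ} :
    3 * i + 1 ∈ kernelReturns (3 * q) ↔ i ∈ kernelReturns q := by
  have hletter : w (3 * i) = w (3 * i + 3 * q) := by
    rw [← mul_add, w_three_mul, w_three_mul]
  refine Iff.trans ⟨fun h => ?_, fun h => ?_⟩ three_mul_mem_kernelReturns_iff
  · exact (mem_kernelReturns_iff_of_succ_mem h).2 hletter
  · exact (succ_mem_kernelReturns_iff h).2 hletter

theorem w_eq_of_Icc_subset {i : ℕ} (h : Set.Icc s t ⊆ kernelReturns q) (hs : s ≤ i) (ht : i < t) :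
    w i = w (i + q) :=
  (succ_mem_kernelReturns_iff (h ⟨hs, ht.le⟩)).1 (h ⟨by omega, ht⟩)

theorem three_dvd_of_Icc_subset (h : Set.Icc s t ⊆ kernelReturns q) (hst : s + 3 ≤ t) : 3 ∣ q := by
  by_contra hq
  obtain hq | hq : q % 3 = 1 ∨ q % 3 = 2 := by omega
  · obtain ⟨m, hs, ht⟩ : ∃ m, s ≤ 3 * m ∧ 3 * m < t := ⟨(s + 2) / 3, by omega, by omega⟩
    have heq := w_eq_of_Icc_subset h hs ht
    rw [w_three_mul, show 3 * m + q = 3 * (m + q / 3) + 1 by omega] at heq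
    exact w_three_mul_add_one_ne_zero _ heq.symm
  · obtain ⟨m, hs, ht⟩ : ∃ m, s ≤ 3 * m + 1 ∧ 3 * m + 1 < t :=
      ⟨(s + 1) / 3, by omega, by omega⟩
    have heq := w_eq_of_Icc_subset h hs ht
    rw [show 3 * m + 1 + q = 3 * (m + q / 3 + 1) by omega, w_three_mul] at heq
    exact w_three_mul_add_one_ne_zero _ heq

theorem Icc_div_three_subset (h : Set.Icc s t ⊆ kernelReturns (3 * p)) (hst : s ≤ t) :
    Set.Icc ((s + 1) / 3) (t / 3) ⊆ kernelReturns p := by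
  rintro n ⟨hn, hn'⟩
  by_cases hs : s ≤ 3 * n
  · exact three_mul_mem_kernelReturns_iff.1 (h ⟨hs, by omega⟩)
  · exact three_mul_add_one_mem_kernelReturns_iff.1 (h ⟨by omega, by omega⟩)

theorem mod_three_eq_two_of_w_eq_two {n : ℕ} (h : w n = 2) : n % 3 = 2 := by
  obtain ⟨m, rfl | rfl | rfl⟩ : ∃ m, n = 3 * m ∨ n = 3 * m + 1 ∨ n = 3 * m + 2 :=
    ⟨n / 3, by omega⟩
  · simp [w_three_mul] at h
  · rcases w_block_cases m with hm | hm | hm | hm <;> simp [hm] at h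
  · omega

theorem mod_three_eq_one_of_w_eq_three {n : ℕ} (h : w n = 3) : n % 3 = 1 := by
  obtain ⟨m, rfl | rfl | rfl⟩ : ∃ m, n = 3 * m ∨ n = 3 * m + 1 ∨ n = 3 * m + 2 :=
    ⟨n / 3, by omega⟩
  · simp [w_three_mul] at h
  · omega
  · rcases w_block_cases m with hm | hm | hm | hm <;> simp [hm] at h

theorem mod_three_eq_two_of_w_succ_eq_zero {n : ℕ} (h : w n = 0) (hsucc : w (n + 1) = 0) :
    n % 3 = 2 := by
  obtain ⟨m, rfl | rfl | rfl⟩ : ∃ m, n = 3 * m ∨ n = 3 * m + 1 ∨ n = 3 * m + 2 :=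
    ⟨n / 3, by omega⟩
  · exact absurd hsucc (w_three_mul_add_one_ne_zero m)
  · exact absurd h (w_three_mul_add_one_ne_zero m)
  · omega

theorem w_eq_one_of_w_succ_eq_two {n : ℕ} (h : w (n + 1) = 2) : w n = 1 := by
  obtain ⟨m, rfl⟩ : ∃ m, n = 3 * m + 1 :=
    ⟨n / 3, by have := mod_three_eq_two_of_w_eq_two h; omega⟩
  rcases w_block_cases m with hm | hm | hm | hm <;> simp [hm] at h ⊢

theorem w_eq_zero_of_w_succ_eq_three {n : ℕ} (h : w (n + 1) = 3) : w n = 0 := by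
  obtain ⟨m, rfl⟩ : ∃ m, n = 3 * m :=
    ⟨n / 3, by have := mod_three_eq_one_of_w_eq_three h; omega⟩
  exact w_three_mul m

theorem mod_three_eq_two_of_last_eq {x y : ℕ} (hne : w x ≠ w y)
    (hlast : w (3 * x + 2) = w (3 * y + 2)) (hsucc : w (x + 1) = w (y + 1)) :
    x % 3 = 2 ∧ y % 3 = 2 := by
  wlog h : w x = 0 ∧ w y = 2 generalizing x y
  · refine (this hne.symm hlast.symm hsucc.symm ?_).symm
    rcases w_block_cases x with hx | hx | hx | hx <;>
      rcases w_block_cases y with hy | hy | hy | hy <;> simp_all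
  · have hy : y % 3 = 2 := mod_three_eq_two_of_w_eq_two h.2
    have hysucc : w (y + 1) = 0 := by
      rw [show y + 1 = 3 * (y / 3 + 1) by omega, w_three_mul]
    exact ⟨mod_three_eq_two_of_w_succ_eq_zero h.1 (hsucc.trans hysucc), hy⟩

theorem mod_three_eq_two_of_middle_eq {x y : ℕ} (hmod : x % 3 = y % 3) (hne : w x ≠ w y)
    (hmiddle : w (3 * x + 1) = w (3 * y + 1)) : x % 3 = 2 := by
  obtain ⟨m, n, ⟨rfl, rfl⟩ | ⟨rfl, rfl⟩ | ⟨rfl, rfl⟩⟩ : ∃ m n, (x = 3 * m ∧ y = 3 * n) ∨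
      (x = 3 * m + 1 ∧ y = 3 * n + 1) ∨ (x = 3 * m + 2 ∧ y = 3 * n + 2) :=
    ⟨x / 3, y / 3, by omega⟩
  · exact absurd ((w_three_mul m).trans (w_three_mul n).symm) hne
  · have hm := w_block_cases m
    have hn := w_block_cases n
    have hx := w_block_cases (3 * m + 1)
    have hy := w_block_cases (3 * n + 1)
    grind
  · omega

-- The hypotheses force `{w (x + 1), w (y + 1)} = {2, 3}`, and in `w` the letter `2` is always
-- preceded by `1` and the letter `3` by `0`.
theorem w_ne_of_middle_eq {x y : ℕ}
    (hne : w (3 * (x + 1) + 2) ≠ w (3 * (y + 1) + 2))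
    (hmiddle : w (3 * (x + 1) + 1) = w (3 * (y + 1) + 1))
    (hmiddle' : w (3 * (3 * (x + 1) + 2) + 1) = w (3 * (3 * (y + 1) + 2) + 1)) :
    w x ≠ w y := by
  wlog h : w (x + 1) = 2 ∧ w (y + 1) = 3 generalizing x y
  · refine (this hne.symm hmiddle.symm hmiddle'.symm ?_).symm
    have hx := w_block_cases (x + 1)
    have hy := w_block_cases (y + 1)
    have hx' := w_block_cases (3 * (x + 1) + 2)
    have hy' := w_block_cases (3 * (y + 1) + 2)
    grind
  · rw [w_eq_one_of_w_succ_eq_two h.1, w_eq_zero_of_w_succ_eq_three h.2]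
    decide

/-- The positions `c + 1, …, b` form a maximal run in `kernelReturns q`. The excluded left
neighbour `c` is used as the index, which avoids a truncated subtraction. -/
structure IsMaximalRun (q c b : ℕ) : Prop where
  left_notMem : c ∉ kernelReturns q
  Icc_subset : Set.Icc (c + 1) b ⊆ kernelReturns q
  right_notMem : b + 1 ∉ kernelReturns q

theorem IsMaximalRun.w_left_ne {c b : ℕ} (h : IsMaximalRun q c b) (hcb : c < b) :
    w c ≠ w (c + q) :=
  mt (mem_kernelReturns_iff_of_succ_mem (h.Icc_subset ⟨le_rfl, hcb⟩)).2 h.left_notMem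

theorem IsMaximalRun.w_right_ne {c b : ℕ} (h : IsMaximalRun q c b) (hcb : c < b) :
    w b ≠ w (b + q) :=
  mt (succ_mem_kernelReturns_iff (h.Icc_subset ⟨hcb, le_rfl⟩)).2 h.right_notMem

theorem IsMaximalRun.exists_three_mul {c b : ℕ} (h : IsMaximalRun p c b) (hcb : c + 1 < b)
    (hlift : Set.Icc (3 * c + 2) (3 * b + 2) ⊆ kernelReturns (3 * p)) :
    ∃ r g d, p = 3 * r ∧ c = 3 * g + 2 ∧ b = 3 * d + 2 := by
  have hlast : w (3 * c + 2) = w (3 * (c + p) + 2) := by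
    rw [w_eq_of_Icc_subset hlift le_rfl (by omega)]; ring_nf
  have hmiddle : w (3 * b + 1) = w (3 * (b + p) + 1) := by
    rw [w_eq_of_Icc_subset hlift (by omega) (Nat.lt_succ_self _)]; ring_nf
  have hsucc : w (c + 1) = w (c + p + 1) := by
    rw [w_eq_of_Icc_subset h.Icc_subset le_rfl hcb]; ring_nf
  have hc := mod_three_eq_two_of_last_eq (h.w_left_ne (by omega)) hlast hsucc
  have hb := mod_three_eq_two_of_middle_eq (by omega) (h.w_right_ne (by omega)) hmiddle
  exact ⟨p / 3, c / 3, b / 3, by omega, by omega, by omega⟩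

theorem IsMaximalRun.le_of_three_mul {r g d : ℕ}
    (h : IsMaximalRun (3 * r) (3 * g + 2) (3 * (d + 1) + 2))
    (hlift : Set.Icc (3 * (3 * g + 2) + 2) (3 * (3 * (d + 1) + 2) + 2) ⊆
      kernelReturns (3 * (3 * r))) : d ≤ g := by
  by_contra! hgd
  have hd : d ∈ kernelReturns r :=
    three_mul_mem_kernelReturns_iff.1 (h.Icc_subset ⟨by omega, by omega⟩)
  have hd' : d + 1 ∈ kernelReturns r :=
    three_mul_mem_kernelReturns_iff.1 (h.Icc_subset ⟨by omega, by omega⟩)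
  have hne : w (3 * (d + 1) + 2) ≠ w (3 * (d + r + 1) + 2) := by
    convert h.w_right_ne (by omega) using 2; ring
  have hmiddle : w (3 * (d + 1) + 1) = w (3 * (d + r + 1) + 1) := by
    rw [w_eq_of_Icc_subset h.Icc_subset (by omega) (Nat.lt_succ_self _)]; ring_nf
  have hmiddle' : w (3 * (3 * (d + 1) + 2) + 1) = w (3 * (3 * (d + r + 1) + 2) + 1) := by
    rw [w_eq_of_Icc_subset hlift (by omega) (Nat.lt_succ_self _)]; ring_nf
  exact w_ne_of_middle_eq hne hmiddle hmiddle' ((succ_mem_kernelReturns_iff hd).1 hd')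

theorem IsMaximalRun.length_cases {c b : ℕ} (h : IsMaximalRun p c b) (hcb : c < b)
    (hlift : Set.Icc (3 * c + 2) (3 * b + 2) ⊆ kernelReturns (3 * p)) :
    b = c + 1 ∨ b = c + 3 ∧ ∃ r, p = 3 * r ∧ (kernelReturns r).Nonempty := by
  refine or_iff_not_imp_left.2 fun hbc => ?_
  obtain ⟨r, g, d, rfl, rfl, rfl⟩ := h.exists_three_mul (by omega) hlift
  obtain ⟨d, rfl⟩ : ∃ e, d = e + 1 := ⟨d - 1, by omega⟩
  have hdg : d ≤ g := h.le_of_three_mul hlift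
  have hd : d + 1 ∈ kernelReturns r :=
    three_mul_mem_kernelReturns_iff.1 (h.Icc_subset ⟨by omega, by omega⟩)
  exact ⟨by omega, r, rfl, d + 1, hd⟩

theorem exists_isMaximalRun
    (hp : ∀ {s t : ℕ}, Set.Icc s t ⊆ kernelReturns p → 34 * (t + 1) ≤ p + 34 * s)
    (h : Set.Icc s t ⊆ kernelReturns (3 * p)) (hlong : 3 * p + 34 * s < 34 * (t + 1)) :
    ∃ c b, s = 3 * c + 2 ∧ t = 3 * b + 2 ∧ IsMaximalRun p c b := by
  have hrun := Icc_div_three_subset h (by omega)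
  have hbound := hp hrun
  obtain ⟨c, b, rfl, rfl⟩ : ∃ c b, s = 3 * c + 2 ∧ t = 3 * b + 2 :=
    ⟨s / 3, t / 3, by omega, by omega⟩
  rw [show (3 * c + 2 + 1) / 3 = c + 1 by omega, show (3 * b + 2) / 3 = b by omega] at hrun
  refine ⟨c, b, rfl, rfl, fun hc => ?_, hrun, fun hb => ?_⟩
  · have hextend : Set.Icc c b ⊆ kernelReturns p := fun i hi => by
      rcases hi.1.eq_or_lt with rfl | hci
      exacts [hc, hrun ⟨hci, hi.2⟩]
    have := hp hextend
    omega
  · have hextend : Set.Icc (c + 1) (b + 1) ⊆ kernelReturns p := fun i hi => by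
      rcases hi.2.eq_or_lt with rfl | hib
      exacts [hb, hrun ⟨hi.1, Nat.lt_succ_iff.1 hib⟩]
    have := hp hextend
    omega

end Desubstitution

section ShortPeriods

/-- Elements of order `4` modulo `5`, `13`, `17` and `29` respectively, each congruent to `1` modulo
the other three primes; note `32045 = 5 * 13 * 17 * 29`. They generate a copy of `(ℤ/4)⁴`, so that
membership in `ker ψ` can be tested on products in `ZMod 32045`. -/
def rootOfUnity : A4 → ZMod 32045 := ![19228, 17256, 13196, 16576]

theorem rootOfUnity_pow_four (a : A4) : rootOfUnity a ^ 4 = 1 := by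
  revert a
  decide

/-- The products of `rootOfUnity` over the prefixes of a word, by increasing length of the prefix.
They are computed as a running product since the kernel has to evaluate this list. -/
def prefixProducts (u : List A4) : List (ZMod 32045) :=
  u.scanl (fun s x => s * rootOfUnity x) 1

theorem length_prefixProducts (u : List A4) : (prefixProducts u).length = u.length + 1 :=
  List.length_scanl

theorem prefixProducts_getElem (u : List A4) {j : ℕ} (h : j < (prefixProducts u).length) :
    (prefixProducts u)[j] = ((u.take j).map rootOfUnity).prod := by
  simp only [prefixProducts, List.getElem_scanl, List.prod_eq_foldl, List.foldl_map]

/-- The list `prefixProducts u` encoded as the digits of a single number in base `2 ^ 15`; two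
windows of the list are then compared by one comparison of numbers. -/
def packedPrefixProducts (u : List A4) : ℕ :=
  Nat.ofDigits (2 ^ 15) ((prefixProducts u).map ZMod.val)

theorem packedPrefixProducts_div_mod (u : List A4) (j m : ℕ) :
    packedPrefixProducts u / (2 ^ 15) ^ j % (2 ^ 15) ^ m =
      Nat.ofDigits (2 ^ 15) ((((prefixProducts u).drop j).take m).map ZMod.val) := by
  have hdigit : ∀ d ∈ (prefixProducts u).map ZMod.val, d < 2 ^ 15 := by
    intro d hd
    obtain ⟨x, -, rfl⟩ := List.mem_map.1 hd
    exact (ZMod.val_lt x).trans (by norm_num)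
  rw [packedPrefixProducts, Nat.ofDigits_div_pow_eq_ofDigits_drop _ (by norm_num) _ hdigit,
    Nat.ofDigits_mod_pow_eq_ofDigits_take _ (by norm_num) _
      fun d hd => hdigit d (List.mem_of_mem_drop hd), List.map_take, List.map_drop]

/-- A length such that, for `0 < q < 136`, no run of that many consecutive positions lies in
`kernelReturns q`: for `q < 40` there is no such position at all, and otherwise the length is the
least one exceeding `q / 34`. -/
def excludedRunLength (q : ℕ) : ℕ := if q < 40 then 1 else q / 34 + 1

/-- The factors of length `2` of `w`; their images under `f⁵` contain all short factors of `w`. -/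
def twoLetterFactors : List (List A4) :=
  [[0, 0], [0, 1], [0, 3], [1, 0], [1, 2], [2, 0], [3, 0], [3, 1]]

theorem wFactor_two_mem (n : ℕ) : wFactor n 2 ∈ twoLetterFactors := by
  have h2 : wFactor n 2 = [w n, w (n + 1)] := rfl
  obtain ⟨m, hm⟩ : ∃ m, n = 3 * m ∨ n = 3 * m + 1 ∨ n = 3 * m + 2 := ⟨n / 3, by omega⟩
  have hnext : w (3 * m + 2 + 1) = 0 := w_three_mul (m + 1)
  rw [h2]
  rcases hm with rfl | rfl | rfl <;> rcases w_block_cases m with h | h | h | h <;>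
    simp [h, hnext, twoLetterFactors]

-- `q` runs over the multiples of `4` below `136`. The offsets `r < 243 = 3 ^ 5` reach every
-- position of `w` in an image `f⁵(a)`, and `f⁵(ab)` then contains the whole window.
theorem packedPrefixProducts_window_ne :
    ∀ u ∈ twoLetterFactors, ∀ r < 243, ∀ q ∈ List.range' 4 33 4,
    packedPrefixProducts (fw^[5] u) / (2 ^ 15) ^ r % (2 ^ 15) ^ excludedRunLength q ≠
      packedPrefixProducts (fw^[5] u) / (2 ^ 15) ^ (r + q) % (2 ^ 15) ^ excludedRunLength q := by
  decide +kernel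

variable {q s t : ℕ}

theorem prefixProducts_getElem_add {n r m : ℕ} (h : n + r ∈ kernelReturns q)
    (hr : r + q < (prefixProducts (wFactor n m)).length) :
    (prefixProducts (wFactor n m))[r] = (prefixProducts (wFactor n m))[r + q] := by
  have hm : r + q ≤ m := by
    rwa [length_prefixProducts, length_wFactor, Nat.lt_succ_iff] at hr
  rw [prefixProducts_getElem, prefixProducts_getElem, take_wFactor (by omega), take_wFactor hm,
    wFactor_add, List.map_append, List.prod_append,
    InKerPsi.prod_map_eq_one h rootOfUnity_pow_four, mul_one]

theorem packedPrefixProducts_window_eq {n r m k : ℕ} (h : ∀ j < k, n + r + j ∈ kernelReturns q)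
    (hm : r + q + k ≤ m + 1) :
    packedPrefixProducts (wFactor n m) / (2 ^ 15) ^ r % (2 ^ 15) ^ k =
      packedPrefixProducts (wFactor n m) / (2 ^ 15) ^ (r + q) % (2 ^ 15) ^ k := by
  have hlength : (prefixProducts (wFactor n m)).length = m + 1 := by
    rw [length_prefixProducts, length_wFactor]
  rw [packedPrefixProducts_div_mod, packedPrefixProducts_div_mod]
  congr 2
  refine List.ext_getElem ?_ fun j hj _ => ?_
  · simp only [List.length_take, List.length_drop, hlength]
    omega
  · simp only [List.length_take, List.length_drop, hlength] at hj
    simp only [List.getElem_take, List.getElem_drop]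
    rw [prefixProducts_getElem_add (q := q) (by rw [← add_assoc]; exact h j (by omega)) (by omega)]
    congr 1
    omega

theorem exists_notMem_kernelReturns (hq : 0 < q) (hq' : q < 136) (i : ℕ) :
    ∃ j < excludedRunLength q, i + j ∉ kernelReturns q := by
  by_contra! h
  have hi : i ∈ kernelReturns q := h 0 (by unfold excludedRunLength; split <;> omega)
  have hfour : 4 ∣ q := length_wFactor i q ▸ InKerPsi.four_dvd_length hi
  have hrange : q ∈ List.range' 4 33 4 := by
    rw [List.mem_range']
    exact ⟨q / 4 - 1, by omega, by omega⟩
  have hne := packedPrefixProducts_window_ne _ (wFactor_two_mem (i / 243)) (i % 243)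
    (by omega) q hrange
  rw [fw_iterate_wFactor] at hne
  refine hne (packedPrefixProducts_window_eq (fun j hj => ?_) ?_)
  · rw [show 3 ^ 5 * (i / 243) + i % 243 = i by omega]
    exact h j hj
  · unfold excludedRunLength
    split <;> omega

theorem forty_le_of_mem_kernelReturns {i : ℕ} (hq : 0 < q) (hi : i ∈ kernelReturns q) :
    40 ≤ q := by
  by_contra! hq'
  obtain ⟨j, hj, hij⟩ := exists_notMem_kernelReturns hq (by omega) i
  rw [excludedRunLength, if_pos hq', Nat.lt_one_iff] at hj
  exact hij (hj ▸ hi)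

theorem thirty_four_mul_succ_le_of_Icc_subset_of_lt (hq : 0 < q) (hq' : q < 136)
    (h : Set.Icc s t ⊆ kernelReturns q) : 34 * (t + 1) ≤ q + 34 * s := by
  by_contra! hlong
  have hq40 : 40 ≤ q := forty_le_of_mem_kernelReturns hq (h ⟨le_rfl, by omega⟩)
  obtain ⟨j, hj, hsj⟩ := exists_notMem_kernelReturns hq hq' s
  rw [excludedRunLength, if_neg (by omega)] at hj
  exact hsj (h ⟨by omega, by omega⟩)

end ShortPeriods

section KernelRepetitions

theorem thirty_four_mul_succ_le_of_Icc_subset {q s t : ℕ} (hq : 0 < q)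
    (h : Set.Icc s t ⊆ kernelReturns q) : 34 * (t + 1) ≤ q + 34 * s := by
  induction q using Nat.strong_induction_on generalizing s t with
  | _ q ih =>
    rcases lt_or_ge q 136 with hq' | hq'
    · exact thirty_four_mul_succ_le_of_Icc_subset_of_lt hq hq' h
    by_contra! hlong
    obtain ⟨p, rfl⟩ := three_dvd_of_Icc_subset h (by omega)
    obtain ⟨c, b, rfl, rfl, hrun⟩ := exists_isMaximalRun (ih p (by omega) (by omega)) h hlong
    obtain rfl | ⟨rfl, r, rfl, i, hi⟩ := hrun.length_cases (by omega) h
    · omega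
    · have := forty_le_of_mem_kernelReturns (by omega) hi
      omega

theorem Icc_subset_kernelReturns {i m q : ℕ} (h : KernelPeriod (wFactor i m) q) :
    Set.Icc i (i + (m - q)) ⊆ kernelReturns q := by
  obtain ⟨hqm, ⟨-, hperiod⟩, hker⟩ := h
  rw [length_wFactor] at hqm hperiod
  rw [take_wFactor hqm] at hker
  suffices hmem : ∀ j, j ≤ m - q → i + j ∈ kernelReturns q by
    rintro n ⟨hin, hn⟩
    obtain ⟨j, rfl⟩ := Nat.exists_eq_add_of_le hin
    exact hmem j (by omega)
  intro j hj
  induction j with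
  | zero => exact hker
  | succ j ih =>
    have hletter := hperiod j (by omega)
    rw [wFactor, List.getElem?_map, List.getElem?_map, List.getElem?_range' (by omega),
      List.getElem?_range' (by omega)] at hletter
    refine (succ_mem_kernelReturns_iff (ih (by omega))).2 ?_
    simpa [add_assoc] using hletter

theorem stmt5_general (q : ℕ) :
    ¬ ∃ v : List A4, FactorOf v w ∧ KernelPeriod v q ∧ 34 * v.length ≥ 35 * q := by
  rintro ⟨v, ⟨i, hocc⟩, hv, hlong⟩
  have hqv := hv.1
  have hq : 0 < q := hv.2.1.1
  rw [hocc.eq_wFactor] at hv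
  have hbound := thirty_four_mul_succ_le_of_Icc_subset hq (Icc_subset_kernelReturns hv)
  omega

end KernelRepetitions

/-- Remark R2: for every `q ≤ 1966`, `w` contains no factor `v` having kernel period `q` such
that `34·|v| ≥ 35·q` (equivalently `|v|/q ≥ 35/34`). -/
theorem stmt5 (q : ℕ) (hq : q ≤ 1966) :
    ¬ ∃ v : List A4, FactorOf v w ∧ KernelPeriod v q ∧ 34 * v.length ≥ 35 * q :=
  stmt5_general q
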